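/- Suppose the Laplace exponent Φ of a driftless subordinator is regularly varying at infinity with index α ∈ (0,1), Φ(λ) ~ λ^α F(λ) with F slowly varying, and suppose L(t,δ)/μ(δ) → t almost surely where μ(δ) = δ^{−1}∫₀^δ Π̄(x)dx. Then almost surely, as δ → 0, L(t,δ) ~ t δ^{−α} F(1/δ)/Γ(2−α). -/

import Mathlib

open MeasureTheory Set Filter
open scoped ProbabilityTheory ENNReal

/-- A subordinator: a nondecreasing right-continuous real-valued process started at `0`,
with stationary independent increments, drift `drift` and Lévy measure `levy`, whose
one-dimensional marginals are given by the Lévy–Khintchine formula. -/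
structure Subordinator (Ω : Type*) [MeasureSpace Ω] where
  X : ℝ → Ω → ℝ
  drift : ℝ
  levy : Measure ℝ
  drift_nonneg : 0 ≤ drift
  levy_supp : levy (Iic 0) = 0
  levy_int : ∫⁻ x in Ioi (0 : ℝ), ENNReal.ofReal (min x 1) ∂levy ≠ ⊤
  meas : ∀ t, Measurable (X t)
  init : ∀ ω, X 0 ω = 0
  mono : ∀ ω, MonotoneOn (fun t => X t ω) (Ici 0)
  rightCont : ∀ ω, ∀ t ≥ (0 : ℝ), ContinuousWithinAt (fun s => X s ω) (Ici t) t
  indep : ∀ s t : ℝ, 0 ≤ s → 0 ≤ t →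
    ProbabilityTheory.IndepFun (X s) (fun ω => X (s + t) ω - X s ω) ℙ
  stat : ∀ s t : ℝ, 0 ≤ s → 0 ≤ t →
    Measure.map (fun ω => X (s + t) ω - X s ω) ℙ = Measure.map (X t) ℙ
  laplace : ∀ t ≥ (0 : ℝ), ∀ l ≥ (0 : ℝ),
    ∫ ω, Real.exp (-(l * X t ω)) =
      Real.exp (-(t * (drift * l + ∫ x in Ioi (0 : ℝ), (1 - Real.exp (-(l * x))) ∂levy)))

variable {Ω : Type*} [MeasureSpace Ω]

/-- The process with `δ`-shortened jumps: every jump of size exceeding `δ` is shortened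
to have size exactly `δ` (pathwise: subtract the excess of each jump over `δ`). -/
noncomputable def Subordinator.shortened (S : Subordinator Ω) (δ t : ℝ) (ω : Ω) : ℝ :=
  S.X t ω - ∑' s : Ioc (0 : ℝ) t,
    max (S.X s ω - Function.leftLim (fun u => S.X u ω) s - δ) 0

/-- `L(t,δ) = X̃_t^δ / δ`, the rescaled `δ`-shortened process. -/
noncomputable def Subordinator.L (S : Subordinator Ω) (t δ : ℝ) (ω : Ω) : ℝ :=
  S.shortened δ t ω / δ

/-- `μ(δ) = (d + ∫₀^δ ν̄(x) dx)/δ = (d + ∫ (x∧δ) ν(dx))/δ`. -/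
noncomputable def Subordinator.mu (S : Subordinator Ω) (δ : ℝ) : ℝ :=
  (S.drift + ∫ x in Ioi (0 : ℝ), min x δ ∂S.levy) / δ

/-- `v(δ) = δ⁻¹ (∫ (x∧δ)² ν(dx))^{1/2}`. -/
noncomputable def Subordinator.v (S : Subordinator Ω) (δ : ℝ) : ℝ :=
  δ⁻¹ * Real.sqrt (∫ x in Ioi (0 : ℝ), (min x δ) ^ 2 ∂S.levy)

open Asymptotics Real
open scoped NNReal Topology

/-!
In the variable `u = e^{-x} ∈ [0, 1]` the measure `(1 - e^{-x}) ν(dx)` is finite and its moments are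
the increments `Φ(n + 1) - Φ(n)` of the Laplace exponent. By Weierstrass, convergence of Laplace
exponents at the integers therefore gives convergence of `∫ f(e^{-x}) ν(dx)` for every continuous
`f` that vanishes and is differentiable at `1`. If `Φ` is regularly varying with index `α`, this
applies to the image of `Φ(l)⁻¹ ν` under `x ↦ l x`, whose exponent `m ↦ Φ(m l) / Φ(l)` tends to the
exponent `m ^ α` of the stable Lévy measure. The choice `f u = -log (max u e⁻¹)`, for which
`f(e^{-x}) = min x 1`, yields `∫ min (l x) 1 ν(dx) ∼ Φ(l) / Γ(2 - α)`, and the left side is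
`μ(1 / l)`.
-/

section RegularVariation

/-- `f` is regularly varying at infinity with index `α`; slow variation is the case `α = 0`.
Neither measurability nor positivity of `f` is part of the definition. -/
def IsRegularlyVarying (f : ℝ → ℝ) (α : ℝ) : Prop :=
  ∀ c : ℝ, 0 < c → Tendsto (fun x => f (c * x) / f x) atTop (𝓝 (c ^ α))

namespace IsRegularlyVarying

variable {f g : ℝ → ℝ} {α β : ℝ}

lemma rpow_mul (hf : IsRegularlyVarying f β) (α : ℝ) :
    IsRegularlyVarying (fun x => x ^ α * f x) (α + β) := by
  intro c hc
  rw [rpow_add hc]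
  refine ((hf c hc).const_mul (c ^ α)).congr' ?_
  filter_upwards [eventually_gt_atTop 0] with x hx
  rw [mul_rpow hc.le hx.le]
  have := rpow_pos_of_pos hx α
  field_simp

lemma congr_isEquivalent (hf : IsRegularlyVarying f α) (hfg : f ~[atTop] g) :
    IsRegularlyVarying g α := fun c hc =>
  ((hfg.comp_tendsto (tendsto_id.const_mul_atTop hc)).div hfg).tendsto_nhds (hf c hc)

end IsRegularlyVarying

end RegularVariation

/-- The Laplace exponent `Φ(l) = ∫ (1 - e^{-lx}) ν(dx)` of a driftless subordinator with Lévy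
measure `ν`. Only the restriction of `ν` to `(0, ∞)` matters. -/
noncomputable def laplaceExponent (ν : Measure ℝ) (l : ℝ) : ℝ :=
  ∫ x in Ioi (0 : ℝ), (1 - exp (-(l * x))) ∂ν

section LaplaceExponent

variable {ν : Measure ℝ}

@[simp] lemma laplaceExponent_zero : laplaceExponent ν 0 = 0 := by
  simp [laplaceExponent]

lemma laplaceExponent_nonneg {l : ℝ} (hl : 0 ≤ l) : 0 ≤ laplaceExponent ν l :=
  setIntegral_nonneg measurableSet_Ioi fun x (hx : 0 < x) =>
    sub_nonneg.2 (exp_le_one_iff.2 (neg_nonpos.2 (by positivity)))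

lemma exp_neg_mem_Icc {x : ℝ} (hx : 0 ≤ x) : exp (-x) ∈ Icc (0 : ℝ) 1 :=
  ⟨(exp_pos _).le, exp_le_one_iff.2 (neg_nonpos.2 hx)⟩

lemma integrableOn_one_sub_exp_neg_mul (hν : IntegrableOn (fun x => min x 1) (Ioi 0) ν) {l : ℝ}
    (hl : 0 ≤ l) : IntegrableOn (fun x => 1 - exp (-(l * x))) (Ioi 0) ν := by
  refine Integrable.mono' (hν.const_mul (max l 1)) (by fun_prop) ?_
  filter_upwards [ae_restrict_mem measurableSet_Ioi] with x (hx : 0 < x)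
  have hu := exp_neg_mem_Icc (mul_nonneg hl hx.le)
  rw [norm_of_nonneg (sub_nonneg.2 hu.2), mul_min_of_nonneg _ _ (by positivity)]
  refine le_min ?_ ?_
  · calc 1 - exp (-(l * x)) ≤ l * x := by linarith [one_sub_le_exp_neg (l * x)]
      _ ≤ max l 1 * x := by gcongr; exact le_max_left _ _
  · linarith [hu.1, le_max_right l 1]

lemma integrableOn_mul_one_sub_exp_neg (hν : IntegrableOn (fun x => 1 - exp (-x)) (Ioi 0) ν)
    {k : ℝ → ℝ} (hk : ContinuousOn k (Icc 0 1)) :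
    IntegrableOn (fun x => k (exp (-x)) * (1 - exp (-x))) (Ioi 0) ν := by
  obtain ⟨C, hC⟩ := isCompact_Icc.exists_bound_of_continuousOn hk
  have hmem : MapsTo (fun x : ℝ => exp (-x)) (Ioi 0) (Icc 0 1) :=
    fun x hx => exp_neg_mem_Icc (le_of_lt hx)
  refine hν.bdd_mul (c := C) ?_ ?_
  · exact (hk.comp (by fun_prop) hmem).aestronglyMeasurable measurableSet_Ioi
  · filter_upwards [ae_restrict_mem measurableSet_Ioi] with x hx using hC _ (hmem hx)

lemma integral_exp_neg_pow_mul_one_sub (hν : IntegrableOn (fun x => 1 - exp (-x)) (Ioi 0) ν)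
    (n : ℕ) :
    ∫ x in Ioi 0, exp (-x) ^ n * (1 - exp (-x)) ∂ν =
      laplaceExponent ν (n + 1 : ℕ) - laplaceExponent ν n := by
  have hint (m : ℕ) : IntegrableOn (fun x => 1 - exp (-(m * x))) (Ioi 0) ν := by
    convert integrableOn_mul_one_sub_exp_neg hν (k := fun u => ∑ i ∈ Finset.range m, u ^ i)
      (by fun_prop) using 2 with x
    rw [geom_sum_mul_neg, ← exp_nat_mul, mul_neg]
  rw [laplaceExponent, laplaceExponent, ← integral_sub (hint _) (hint _)]
  congr with x
  rw [← mul_neg, ← mul_neg, exp_nat_mul, exp_nat_mul]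
  ring

end LaplaceExponent

section ContinuityTheorem

variable {ι : Type*} {𝓕 : Filter ι} {ν : ι → Measure ℝ} {ν' : Measure ℝ}

lemma tendsto_integral_polynomial_mul_one_sub_exp_neg
    (hν : ∀ᶠ i in 𝓕, IntegrableOn (fun x => 1 - exp (-x)) (Ioi 0) (ν i))
    (hν' : IntegrableOn (fun x => 1 - exp (-x)) (Ioi 0) ν')
    (hΦ : ∀ n : ℕ, Tendsto (fun i => laplaceExponent (ν i) n) 𝓕 (𝓝 (laplaceExponent ν' n)))
    (p : Polynomial ℝ) :
    Tendsto (fun i => ∫ x in Ioi 0, p.eval (exp (-x)) * (1 - exp (-x)) ∂ν i) 𝓕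
      (𝓝 (∫ x in Ioi 0, p.eval (exp (-x)) * (1 - exp (-x)) ∂ν')) := by
  induction p using Polynomial.induction_on' with
  | add p q hp hq =>
    have hadd {μ : Measure ℝ} (hμ : IntegrableOn (fun x => 1 - exp (-x)) (Ioi 0) μ) :
        ∫ x in Ioi 0, (p + q).eval (exp (-x)) * (1 - exp (-x)) ∂μ =
          (∫ x in Ioi 0, p.eval (exp (-x)) * (1 - exp (-x)) ∂μ) +
            ∫ x in Ioi 0, q.eval (exp (-x)) * (1 - exp (-x)) ∂μ := by
      simp only [Polynomial.eval_add, add_mul]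
      exact integral_add (integrableOn_mul_one_sub_exp_neg hμ p.continuousOn)
        (integrableOn_mul_one_sub_exp_neg hμ q.continuousOn)
    rw [hadd hν']
    exact (hp.add hq).congr' (hν.mono fun i hi => (hadd hi).symm)
  | monomial n a =>
    simp only [Polynomial.eval_monomial, mul_assoc, integral_const_mul]
    rw [integral_exp_neg_pow_mul_one_sub hν']
    refine (((hΦ (n + 1)).sub (hΦ n)).congr' ?_).const_mul a
    exact hν.mono fun i hi => (integral_exp_neg_pow_mul_one_sub hi n).symm

lemma dist_integral_mul_one_sub_exp_neg_le {μ : Measure ℝ}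
    (hμ : IntegrableOn (fun x => 1 - exp (-x)) (Ioi 0) μ) {k k' : ℝ → ℝ}
    (hk : ContinuousOn k (Icc 0 1)) (hk' : ContinuousOn k' (Icc 0 1)) {η : ℝ}
    (hη : ∀ u ∈ Icc (0 : ℝ) 1, dist (k u) (k' u) ≤ η) :
    dist (∫ x in Ioi 0, k (exp (-x)) * (1 - exp (-x)) ∂μ)
      (∫ x in Ioi 0, k' (exp (-x)) * (1 - exp (-x)) ∂μ) ≤ η * laplaceExponent μ 1 := by
  rw [dist_eq_norm, ← integral_sub (integrableOn_mul_one_sub_exp_neg hμ hk)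
    (integrableOn_mul_one_sub_exp_neg hμ hk'), laplaceExponent, ← integral_const_mul]
  simp only [one_mul]
  refine norm_integral_le_of_norm_le (hμ.const_mul η) ?_
  filter_upwards [ae_restrict_mem measurableSet_Ioi] with x (hx : 0 < x)
  have hu := exp_neg_mem_Icc hx.le
  rw [← sub_mul, norm_mul, norm_of_nonneg (sub_nonneg.2 hu.2), ← dist_eq_norm]
  exact mul_le_mul_of_nonneg_right (hη _ hu) (sub_nonneg.2 hu.2)

lemma tendsto_integral_mul_one_sub_exp_neg
    (hν : ∀ᶠ i in 𝓕, IntegrableOn (fun x => 1 - exp (-x)) (Ioi 0) (ν i))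
    (hν' : IntegrableOn (fun x => 1 - exp (-x)) (Ioi 0) ν')
    (hΦ : ∀ n : ℕ, Tendsto (fun i => laplaceExponent (ν i) n) 𝓕 (𝓝 (laplaceExponent ν' n)))
    {k : ℝ → ℝ} (hk : ContinuousOn k (Icc 0 1)) :
    Tendsto (fun i => ∫ x in Ioi 0, k (exp (-x)) * (1 - exp (-x)) ∂ν i) 𝓕
      (𝓝 (∫ x in Ioi 0, k (exp (-x)) * (1 - exp (-x)) ∂ν')) := by
  refine Metric.tendsto_nhds.2 fun ε hε => ?_
  set M := laplaceExponent ν' 1 + 1 with hM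
  have hM₀ : 0 < M := by linarith [laplaceExponent_nonneg (ν := ν') zero_le_one]
  obtain ⟨p, hp⟩ := exists_polynomial_near_of_continuousOn 0 1 k hk (ε / (3 * M)) (by positivity)
  have hkp : ∀ u ∈ Icc (0 : ℝ) 1, dist (k u) (p.eval u) ≤ ε / (3 * M) := fun u hu => by
    rw [dist_comm]; exact (hp u hu).le
  have hmass : ∀ᶠ i in 𝓕, laplaceExponent (ν i) 1 < M := by
    simpa using (hΦ 1).eventually_lt_const (by simp [hM])
  have hpoly := Metric.tendsto_nhds.1
    (tendsto_integral_polynomial_mul_one_sub_exp_neg hν hν' hΦ p) (ε / 3) (by positivity)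
  filter_upwards [hν, hmass, hpoly] with i hi hiM hip
  have hleft := dist_integral_mul_one_sub_exp_neg_le hi hk p.continuousOn hkp
  have hright := dist_integral_mul_one_sub_exp_neg_le hν' hk p.continuousOn hkp
  rw [dist_comm] at hright
  have hlt {m : ℝ} (hm : m < M) : ε / (3 * M) * m < ε / 3 := by
    calc ε / (3 * M) * m < ε / (3 * M) * M := by gcongr
      _ = ε / 3 := by field_simp
  calc _ ≤ _ := dist_triangle4 _ _ _ _
    _ < ε / 3 + ε / 3 + ε / 3 := by
      gcongr
      exacts [hleft.trans_lt (hlt hiM), hright.trans_lt (hlt (by simp [hM]))]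
    _ = ε := by ring

theorem tendsto_integral_of_tendsto_laplaceExponent
    (hν : ∀ᶠ i in 𝓕, IntegrableOn (fun x => 1 - exp (-x)) (Ioi 0) (ν i))
    (hν' : IntegrableOn (fun x => 1 - exp (-x)) (Ioi 0) ν')
    (hΦ : ∀ n : ℕ, Tendsto (fun i => laplaceExponent (ν i) n) 𝓕 (𝓝 (laplaceExponent ν' n)))
    {f : ℝ → ℝ} (hf : Continuous f) (hf' : DifferentiableAt ℝ f 1) (hf₁ : f 1 = 0) :
    Tendsto (fun i => ∫ x in Ioi 0, f (exp (-x)) ∂ν i) 𝓕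
      (𝓝 (∫ x in Ioi 0, f (exp (-x)) ∂ν')) := by
  have hslope : Continuous (dslope f 1) := by
    rw [← continuousOn_univ, continuousOn_dslope univ_mem]
    exact ⟨hf.continuousOn, hf'⟩
  have hf_eq (u : ℝ) : f u = -dslope f 1 u * (1 - u) := by
    have := sub_smul_dslope f 1 u
    rw [hf₁, sub_zero, smul_eq_mul] at this
    linarith
  simp only [hf_eq]
  exact tendsto_integral_mul_one_sub_exp_neg hν hν' hΦ (k := fun u => -dslope f 1 u)
    hslope.neg.continuousOn

end ContinuityTheorem

section Rescaling

variable {ν : Measure ℝ} {l : ℝ}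

lemma setIntegral_Ioi_smul_map_mul_left (hl : 0 < l) (c : ℝ≥0) (g : ℝ → ℝ) :
    ∫ x in Ioi 0, g x ∂(c • ν.map (l * ·)) = c * ∫ x in Ioi 0, g (l * x) ∂ν := by
  rw [Measure.restrict_smul, integral_smul_nnreal_measure,
    (measurableEmbedding_mulLeft₀ hl.ne').setIntegral_map, preimage_const_mul_Ioi₀ 0 hl, zero_div,
    NNReal.smul_def, smul_eq_mul]

lemma integrableOn_Ioi_smul_map_mul_left (hl : 0 < l) (c : ℝ≥0) {g : ℝ → ℝ}
    (hg : IntegrableOn (fun x => g (l * x)) (Ioi 0) ν) :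
    IntegrableOn g (Ioi 0) (c • ν.map (l * ·)) := by
  rw [IntegrableOn, Measure.restrict_smul]
  refine Integrable.smul_measure_nnreal ?_
  rwa [← IntegrableOn, (measurableEmbedding_mulLeft₀ hl.ne').integrableOn_map_iff,
    preimage_const_mul_Ioi₀ 0 hl, zero_div]

lemma laplaceExponent_smul_map_mul_left (hl : 0 < l) (c : ℝ≥0) (m : ℝ) :
    laplaceExponent (c • ν.map (l * ·)) m = c * laplaceExponent ν (m * l) := by
  simp only [laplaceExponent, setIntegral_Ioi_smul_map_mul_left hl, mul_assoc]

end Rescaling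

section StableLevyMeasure

variable {α : ℝ}

/-- The Lévy measure of the standard `α`-stable subordinator, normalised so that its Laplace
exponent is `l ↦ l ^ α`. -/
noncomputable def stableLevyMeasure (α : ℝ) : Measure ℝ :=
  (volume.restrict (Ioi 0)).withDensity
    fun x => ENNReal.ofReal (α / Gamma (1 - α) * x ^ (-α - 1))

lemma stableLevyDensity_nonneg (hα : α ∈ Ioo (0 : ℝ) 1) {x : ℝ} (hx : 0 ≤ x) :
    0 ≤ α / Gamma (1 - α) * x ^ (-α - 1) :=
  mul_nonneg (div_nonneg hα.1.le (Gamma_nonneg_of_nonneg (sub_nonneg.2 hα.2.le)))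
    (rpow_nonneg hx _)

lemma setIntegral_stableLevyMeasure (hα : α ∈ Ioo (0 : ℝ) 1) (g : ℝ → ℝ) :
    ∫ x in Ioi 0, g x ∂stableLevyMeasure α =
      α / Gamma (1 - α) * ∫ x in Ioi 0, g x * x ^ (-α - 1) := by
  rw [stableLevyMeasure, setIntegral_withDensity_eq_setIntegral_toReal_smul (by fun_prop)
    (by simp) _ measurableSet_Ioi, Measure.restrict_restrict measurableSet_Ioi, inter_self,
    ← integral_const_mul]
  refine setIntegral_congr_fun measurableSet_Ioi fun x (hx : 0 < x) => ?_
  simp only [smul_eq_mul, ENNReal.toReal_ofReal (stableLevyDensity_nonneg hα hx.le)]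
  ring

lemma integrableOn_stableLevyMeasure_iff (hα : α ∈ Ioo (0 : ℝ) 1) {g : ℝ → ℝ} :
    IntegrableOn g (Ioi 0) (stableLevyMeasure α) ↔
      IntegrableOn (fun x => g x * x ^ (-α - 1)) (Ioi 0) := by
  have hc : α / Gamma (1 - α) ≠ 0 :=
    (div_pos hα.1 (Gamma_pos_of_pos (sub_pos.2 hα.2))).ne'
  rw [stableLevyMeasure, IntegrableOn, restrict_withDensity measurableSet_Ioi,
    Measure.restrict_restrict measurableSet_Ioi, inter_self,
    integrable_withDensity_iff_integrable_smul' (by fun_prop) (by simp)]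
  refine (integrable_congr ?_).trans (integrable_const_mul_iff (isUnit_iff_ne_zero.2 hc) _)
  filter_upwards [ae_restrict_mem measurableSet_Ioi] with x (hx : 0 < x)
  rw [smul_eq_mul, ENNReal.toReal_ofReal (stableLevyDensity_nonneg hα hx.le)]
  ring

lemma eqOn_min_one_mul_rpow_Ioc (α : ℝ) :
    EqOn (fun x : ℝ => min x 1 * x ^ (-α - 1)) (fun x => x ^ (-α)) (Ioc 0 1) := by
  rintro x ⟨hx₀, hx₁⟩
  simp only [min_eq_left hx₁, rpow_sub_one hx₀.ne', mul_div_cancel₀ _ hx₀.ne']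

lemma eqOn_min_one_mul_rpow_Ioi (α : ℝ) :
    EqOn (fun x : ℝ => min x 1 * x ^ (-α - 1)) (fun x => x ^ (-α - 1)) (Ioi 1) := by
  intro x (hx : 1 < x)
  simp only [min_eq_right hx.le, one_mul]

lemma integrableOn_min_one_mul_rpow_Ioc (hα : α < 1) :
    IntegrableOn (fun x : ℝ => min x 1 * x ^ (-α - 1)) (Ioc 0 1) :=
  ((intervalIntegral.intervalIntegrable_rpow' (by linarith)).1).congr_fun
    (eqOn_min_one_mul_rpow_Ioc α).symm measurableSet_Ioc

lemma integrableOn_min_one_mul_rpow_Ioi (hα : 0 < α) :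
    IntegrableOn (fun x : ℝ => min x 1 * x ^ (-α - 1)) (Ioi 1) :=
  (integrableOn_Ioi_rpow_of_lt (by linarith) one_pos).congr_fun
    (eqOn_min_one_mul_rpow_Ioi α).symm measurableSet_Ioi

lemma integral_min_one_mul_rpow (hα : α ∈ Ioo (0 : ℝ) 1) :
    ∫ x in Ioi (0 : ℝ), min x 1 * x ^ (-α - 1) = 1 / (α * (1 - α)) := by
  have h₀ := hα.1.ne'
  have h₁ : 1 - α ≠ 0 := (sub_pos.2 hα.2).ne'
  have hIoc : ∫ x in Ioc (0 : ℝ) 1, min x 1 * x ^ (-α - 1) = 1 / (1 - α) := by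
    rw [setIntegral_congr_fun measurableSet_Ioc (eqOn_min_one_mul_rpow_Ioc α),
      ← intervalIntegral.integral_of_le zero_le_one,
      integral_rpow (Or.inl (by linarith [hα.2])), neg_add_eq_sub, one_rpow, zero_rpow h₁, sub_zero]
  have hIoi : ∫ x in Ioi (1 : ℝ), min x 1 * x ^ (-α - 1) = 1 / α := by
    rw [setIntegral_congr_fun measurableSet_Ioi (eqOn_min_one_mul_rpow_Ioi α),
      integral_Ioi_rpow_of_lt (by linarith [hα.1]) one_pos, sub_add_cancel, one_rpow,
      neg_div_neg_eq]
  rw [← Ioc_union_Ioi_eq_Ioi zero_le_one, setIntegral_union (Ioc_disjoint_Ioi le_rfl)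
    measurableSet_Ioi (integrableOn_min_one_mul_rpow_Ioc hα.2)
    (integrableOn_min_one_mul_rpow_Ioi hα.1), hIoc, hIoi]
  field_simp
  ring

lemma integrableOn_min_one_stableLevyMeasure (hα : α ∈ Ioo (0 : ℝ) 1) :
    IntegrableOn (fun x => min x 1) (Ioi 0) (stableLevyMeasure α) := by
  rw [integrableOn_stableLevyMeasure_iff hα, ← Ioc_union_Ioi_eq_Ioi zero_le_one]
  exact (integrableOn_min_one_mul_rpow_Ioc hα.2).union (integrableOn_min_one_mul_rpow_Ioi hα.1)

lemma integral_min_one_stableLevyMeasure (hα : α ∈ Ioo (0 : ℝ) 1) :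
    ∫ x in Ioi 0, min x 1 ∂stableLevyMeasure α = 1 / Gamma (2 - α) := by
  have h₁ : 0 < 1 - α := sub_pos.2 hα.2
  rw [setIntegral_stableLevyMeasure hα, integral_min_one_mul_rpow hα,
    show 2 - α = (1 - α) + 1 by ring, Gamma_add_one h₁.ne']
  have := (Gamma_pos_of_pos h₁).ne'
  have := hα.1.ne'
  field_simp

lemma integral_exp_neg_mul_mul_rpow_neg (hα : α < 1) {l : ℝ} (hl : 0 < l) :
    ∫ x in Ioi 0, l * exp (-(l * x)) * x ^ (-α) = Gamma (1 - α) * l ^ α := by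
  have h := integral_rpow_mul_exp_neg_mul_Ioi (sub_pos.2 hα) hl
  rw [show 1 - α - 1 = -α by ring, one_div, inv_rpow hl.le, ← rpow_neg hl.le,
    neg_sub, rpow_sub_one hl.ne'] at h
  simp only [mul_assoc, integral_const_mul, mul_comm (exp _), h]
  field_simp

lemma tendsto_one_sub_exp_neg_mul_mul_rpow_nhdsGT (hα : α < 1) {l : ℝ} (hl : 0 ≤ l) :
    Tendsto (fun x => (1 - exp (-(l * x))) * x ^ (-α)) (𝓝[>] 0) (𝓝 0) := by
  have hbound : Tendsto (fun x : ℝ => l * x ^ (1 - α)) (𝓝[>] 0) (𝓝 0) := by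
    have := (continuousAt_rpow_const (0 : ℝ) (1 - α) (.inr (sub_nonneg.2 hα.le))).tendsto
    rw [zero_rpow (sub_pos.2 hα).ne'] at this
    simpa using (this.mono_left nhdsWithin_le_nhds).const_mul l
  refine squeeze_zero' ?_ ?_ hbound <;> filter_upwards [self_mem_nhdsWithin] with x (hx : 0 < x)
  · exact mul_nonneg (sub_nonneg.2 (exp_neg_mem_Icc (by positivity)).2) (rpow_nonneg hx.le _)
  · calc (1 - exp (-(l * x))) * x ^ (-α) ≤ l * x * x ^ (-α) := by
          gcongr; linarith [one_sub_le_exp_neg (l * x)]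
      _ = l * x ^ (1 - α) := by
          rw [mul_assoc, sub_eq_add_neg, rpow_add hx, rpow_one]

lemma tendsto_one_sub_exp_neg_mul_mul_rpow_atTop (hα : 0 < α) {l : ℝ} (hl : 0 < l) :
    Tendsto (fun x => (1 - exp (-(l * x))) * x ^ (-α)) atTop (𝓝 0) := by
  have hexp : Tendsto (fun x => exp (-(l * x))) atTop (𝓝 0) :=
    tendsto_exp_neg_atTop_nhds_zero.comp (tendsto_id.const_mul_atTop hl)
  simpa using (hexp.const_sub 1).mul (tendsto_rpow_neg_atTop hα)

lemma integral_one_sub_exp_neg_mul_mul_rpow (hα : α ∈ Ioo (0 : ℝ) 1) {l : ℝ} (hl : 0 < l) :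
    ∫ x in Ioi 0, (1 - exp (-(l * x))) * x ^ (-α - 1) = Gamma (1 - α) / α * l ^ α := by
  have hint : IntegrableOn (fun x => (1 - exp (-(l * x))) * x ^ (-α - 1)) (Ioi 0) :=
    (integrableOn_stableLevyMeasure_iff hα).1
      (integrableOn_one_sub_exp_neg_mul (integrableOn_min_one_stableLevyMeasure hα) hl.le)
  have hint' : IntegrableOn (fun x => l * exp (-(l * x)) * x ^ (-α)) (Ioi 0) :=
    .of_integral_ne_zero (by
      rw [integral_exp_neg_mul_mul_rpow_neg hα.2 hl]
      have := Gamma_pos_of_pos (sub_pos.2 hα.2)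
      positivity)
  have hu (x : ℝ) : HasDerivAt (fun x => 1 - exp (-(l * x))) (l * exp (-(l * x))) x := by
    simpa [mul_comm] using (((hasDerivAt_id x).const_mul l).fun_neg.exp).const_sub 1
  have hv : ∀ x ∈ Ioi (0 : ℝ), HasDerivAt (fun x => x ^ (-α)) (-α * x ^ (-α - 1)) x :=
    fun x hx => hasDerivAt_rpow_const (.inl (ne_of_gt hx))
  have hparts := integral_Ioi_mul_deriv_eq_deriv_mul (fun x _ => hu x) hv
    (by simpa only [IntegrableOn, Pi.mul_def, mul_left_comm] using hint.const_mul (-α)) hint'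
    (tendsto_one_sub_exp_neg_mul_mul_rpow_nhdsGT hα.2 hl.le)
    (tendsto_one_sub_exp_neg_mul_mul_rpow_atTop hα.1 hl)
  simp only [mul_left_comm _ (-α), integral_const_mul,
    integral_exp_neg_mul_mul_rpow_neg hα.2 hl] at hparts
  have := hα.1.ne'
  field_simp
  linarith

lemma laplaceExponent_stableLevyMeasure (hα : α ∈ Ioo (0 : ℝ) 1) {l : ℝ} (hl : 0 ≤ l) :
    laplaceExponent (stableLevyMeasure α) l = l ^ α := by
  rcases hl.eq_or_lt with rfl | hl
  · rw [laplaceExponent_zero, zero_rpow hα.1.ne']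
  · rw [laplaceExponent, setIntegral_stableLevyMeasure hα,
      integral_one_sub_exp_neg_mul_mul_rpow hα hl]
    have := (Gamma_pos_of_pos (sub_pos.2 hα.2)).ne'
    have := hα.1.ne'
    field_simp

end StableLevyMeasure

section Tauberian

variable {ν : Measure ℝ} {α : ℝ}

theorem tendsto_integral_comp_exp_neg_mul_div_laplaceExponent
    (hν : IntegrableOn (fun x => min x 1) (Ioi 0) ν) (hα : α ∈ Ioo (0 : ℝ) 1)
    (hΦ : IsRegularlyVarying (laplaceExponent ν) α)
    {f : ℝ → ℝ} (hf : Continuous f) (hf' : DifferentiableAt ℝ f 1) (hf₁ : f 1 = 0) :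
    Tendsto (fun l => (∫ x in Ioi 0, f (exp (-(l * x))) ∂ν) / laplaceExponent ν l) atTop
      (𝓝 (∫ x in Ioi 0, f (exp (-x)) ∂stableLevyMeasure α)) := by
  let c (l : ℝ) : ℝ≥0 := (laplaceExponent ν l)⁻¹.toNNReal
  have hc {l : ℝ} (hl : 0 < l) : (c l : ℝ) = (laplaceExponent ν l)⁻¹ :=
    coe_toNNReal _ (inv_nonneg.2 (laplaceExponent_nonneg hl.le))
  have hstable : IntegrableOn (fun x => 1 - exp (-x)) (Ioi 0) (stableLevyMeasure α) := by
    simpa using integrableOn_one_sub_exp_neg_mul (integrableOn_min_one_stableLevyMeasure hα)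
      zero_le_one
  have hrescaled : ∀ᶠ l in atTop,
      IntegrableOn (fun x => 1 - exp (-x)) (Ioi 0) (c l • ν.map (l * ·)) := by
    filter_upwards [eventually_gt_atTop 0] with l hl
    exact integrableOn_Ioi_smul_map_mul_left hl _ (integrableOn_one_sub_exp_neg_mul hν hl.le)
  have hexponent (n : ℕ) : Tendsto (fun l => laplaceExponent (c l • ν.map (l * ·)) n) atTop
      (𝓝 (laplaceExponent (stableLevyMeasure α) n)) := by
    rw [laplaceExponent_stableLevyMeasure hα n.cast_nonneg]
    rcases n.eq_zero_or_pos with rfl | hn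
    · simp [zero_rpow hα.1.ne']
    · refine (hΦ n (by positivity)).congr' ?_
      filter_upwards [eventually_gt_atTop 0] with l hl
      rw [laplaceExponent_smul_map_mul_left hl, hc hl, div_eq_inv_mul]
  refine (tendsto_integral_of_tendsto_laplaceExponent hrescaled hstable hexponent
    hf hf' hf₁).congr' ?_
  filter_upwards [eventually_gt_atTop 0] with l hl
  rw [setIntegral_Ioi_smul_map_mul_left hl _ (fun x => f (exp (-x))), hc hl, div_eq_inv_mul]

lemma min_one_eq_neg_log_max (x : ℝ) : min x 1 = -log (max (exp (-x)) (exp (-1))) := by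
  rw [← exp_monotone.map_max, log_exp, max_neg_neg, neg_neg]

theorem isEquivalent_integral_min_mul_one (hν : IntegrableOn (fun x => min x 1) (Ioi 0) ν)
    (hα : α ∈ Ioo (0 : ℝ) 1) (hΦ : IsRegularlyVarying (laplaceExponent ν) α) :
    (fun l => ∫ x in Ioi 0, min (l * x) 1 ∂ν) ~[atTop]
      fun l => laplaceExponent ν l / Gamma (2 - α) := by
  have hpos (u : ℝ) : 0 < max u (exp (-1)) := lt_max_of_lt_right (exp_pos _)
  have hcont : Continuous fun u => -log (max u (exp (-1))) :=
    (Continuous.log (by fun_prop) fun u => (hpos u).ne').neg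
  have hlog : (fun u => -log (max u (exp (-1)))) =ᶠ[𝓝 1] fun u => -log u := by
    filter_upwards [eventually_ge_nhds (exp_lt_one_iff.2 neg_one_lt_zero)] with u hu
    rw [max_eq_left hu]
  have hdiff : DifferentiableAt ℝ (fun u => -log (max u (exp (-1)))) 1 :=
    hlog.differentiableAt_iff.2 (differentiableAt_log one_ne_zero).neg
  have htendsto := tendsto_integral_comp_exp_neg_mul_div_laplaceExponent hν hα hΦ hcont hdiff
    (by simp)
  simp only [← min_one_eq_neg_log_max, integral_min_one_stableLevyMeasure hα] at htendsto
  have hG : Gamma (2 - α) ≠ 0 := (Gamma_pos_of_pos (by linarith [hα.2])).ne'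
  refine isEquivalent_of_tendsto_one ?_
  convert htendsto.mul_const (Gamma (2 - α)) using 2 with l
  · simp only [Pi.div_apply]
    field_simp
  · field_simp

end Tauberian

namespace Subordinator

variable (S : Subordinator Ω)

lemma integrableOn_min_one_levy : IntegrableOn (fun x => min x 1) (Ioi 0) S.levy := by
  refine ⟨by fun_prop, (hasFiniteIntegral_iff_ofReal ?_).2 S.levy_int.lt_top⟩
  filter_upwards [ae_restrict_mem measurableSet_Ioi] with x (hx : 0 < x)
  exact le_min hx.le zero_le_one

lemma mu_eq_drift_div_add_integral {δ : ℝ} (hδ : 0 < δ) :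
    S.mu δ = S.drift / δ + ∫ x in Ioi 0, min (δ⁻¹ * x) 1 ∂S.levy := by
  rw [mu, add_div, div_eq_inv_mul (∫ _ in _, _ ∂_), ← integral_const_mul]
  congr with x
  rw [mul_min_of_nonneg _ _ (inv_nonneg.2 hδ.le), inv_mul_cancel₀ hδ.ne']

theorem isEquivalent_mu (hdrift : S.drift = 0) {α : ℝ} (hα : α ∈ Ioo (0 : ℝ) 1) {F : ℝ → ℝ}
    (hF : IsRegularlyVarying F 0)
    (hΦ : laplaceExponent S.levy ~[atTop] fun l => l ^ α * F l) :
    S.mu ~[𝓝[>] 0] fun δ => δ ^ (-α) * F (1 / δ) / Gamma (2 - α) := by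
  have hreg : IsRegularlyVarying (laplaceExponent S.levy) α := by
    simpa using (hF.rpow_mul α).congr_isEquivalent hΦ.symm
  have hmin := (isEquivalent_integral_min_mul_one S.integrableOn_min_one_levy hα hreg).trans
    (hΦ.div .refl)
  refine ((hmin.comp_tendsto tendsto_inv_nhdsGT_zero).congr_left ?_).congr_right ?_
  · filter_upwards [self_mem_nhdsWithin] with δ hδ
    simp [S.mu_eq_drift_div_add_integral hδ, hdrift]
  · filter_upwards [self_mem_nhdsWithin] with δ (hδ : 0 < δ)
    simp only [Function.comp_apply, Pi.div_apply, inv_rpow hδ.le, rpow_neg hδ.le, one_div]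

end Subordinator

/-- If the Laplace exponent of a driftless subordinator is regularly varying at infinity,
`Φ(λ) ~ λ^α F(λ)` with `α ∈ (0,1)` and `F` slowly varying, and `L(t,δ)/μ(δ) → t`
almost surely, then almost surely `L(t,δ) ~ t δ^{−α} F(1/δ)/Γ(2−α)` as `δ → 0`. -/
theorem shortened_process_regular_variation [IsProbabilityMeasure (ℙ : Measure Ω)]
    (S : Subordinator Ω) (hdrift : S.drift = 0)
    (hinf : S.levy (Ioi (0 : ℝ)) = ⊤)
    (α : ℝ) (hα : α ∈ Ioo (0 : ℝ) 1) (F : ℝ → ℝ)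
    (hF : ∀ x : ℝ, 0 < x → 0 < F x)
    (hFslow : ∀ c : ℝ, 0 < c → Tendsto (fun lam : ℝ => F (c * lam) / F lam) atTop (nhds 1))
    (hRV : Tendsto (fun lam : ℝ =>
        (S.drift * lam + ∫ x in Ioi (0 : ℝ), (1 - Real.exp (-(lam * x))) ∂S.levy) /
          (lam ^ α * F lam))
      atTop (nhds 1))
    (t : ℝ) (ht : 0 < t)
    (has : ∀ᵐ ω ∂(ℙ : Measure Ω),
      Tendsto (fun δ : ℝ => S.L t δ ω / S.mu δ) (nhdsWithin 0 (Ioi 0)) (nhds t)) :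
    ∀ᵐ ω ∂(ℙ : Measure Ω),
      Tendsto (fun δ : ℝ =>
          S.L t δ ω / (t * δ ^ (-α) * F (1 / δ) / Real.Gamma (2 - α)))
        (nhdsWithin 0 (Ioi 0)) (nhds 1) := by
  have hΦ : laplaceExponent S.levy ~[atTop] fun l => l ^ α * F l :=
    isEquivalent_of_tendsto_one (by simpa [hdrift, Pi.div_def, laplaceExponent] using hRV)
  have hmu := S.isEquivalent_mu hdrift hα (fun c hc => by simpa using hFslow c hc) hΦ
  have hne : ∀ᶠ δ in 𝓝[>] (0 : ℝ), t * δ ^ (-α) * F (1 / δ) / Gamma (2 - α) ≠ 0 := by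
    filter_upwards [self_mem_nhdsWithin] with δ (hδ : 0 < δ)
    have := hF (1 / δ) (by positivity)
    have := Gamma_pos_of_pos (show 0 < 2 - α by linarith [hα.2])
    positivity
  filter_upwards [has] with ω hω
  refine (isEquivalent_iff_tendsto_one hne).1 ?_
  refine ((((isEquivalent_const_iff_tendsto ht.ne').2 hω).mul hmu).congr_left ?_).congr_right ?_
  · filter_upwards [hω.eventually_ne ht.ne'] with δ hδ
    exact div_mul_cancel₀ _ (div_ne_zero_iff.1 hδ).2
  · exact .of_forall fun δ => by simp only [Pi.mul_apply, Function.const_apply]; ring
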